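/- Let d ∈ ℕ and f ∈ L¹([0,1]^d). Then for every Schwartz function η ∈ 𝒮(ℝ^d) the family ( (∫_{[0,1]^d} f c_{k̄}) · (∫_{[0,1]^d} c_{k̄} η) )_{k̄ ∈ ℕ₀^d} is absolutely summable and Σ_{k̄ ∈ ℕ₀^d} (∫_{[0,1]^d} f(x) c_{k̄}(x) dx)(∫_{[0,1]^d} c_{k̄}(x) η(x) dx) = ∫_{[0,1]^d} f(x) η(x) dx. In other words, identifying f with its extension by 0 to ℝ^d, the half-period cosine series of f converges to f weak*-ly in the space of tempered distributions 𝒮′(ℝ^d). -/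

import Mathlib

open MeasureTheory Set

/-- Univariate half-period cosine functions: `c₀ ≡ 1`, `c_k(x) = √2 cos(πkx)` for `k ≥ 1`. -/
noncomputable def hpcFun (k : ℕ) (x : ℝ) : ℝ :=
  if k = 0 then 1 else Real.sqrt 2 * Real.cos (Real.pi * (k : ℝ) * x)

/-- Tensorized half-period cosine functions `c_k̄`. -/
noncomputable def hpc (d : ℕ) (k : Fin d → ℕ) (x : Fin d → ℝ) : ℝ :=
  ∏ i, hpcFun (k i) (x i)

/-!
By Fourier inversion a Schwartz function is a superposition of plane waves with a rapidly decaying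
density, and a plane wave is a product of univariate exponentials. The half-period cosine series
of a function on `[0, 1]` is the Fourier series of its even reflection to `ℝ / 2ℤ`. This
reflection is continuous and, since `sin (π k) = 0`, integrating by parts twice leaves boundary
terms with the first derivative only: no periodicity is needed for the coefficients of
`x ↦ exp (2πi t x)` to be `O((1 + t²) / (1 + k²))`. Hence each exponential is the sum of an
absolutely convergent cosine series. Absolutely convergent expansions multiply to expansions of
tensor products, a polynomial weight on the density lets them be integrated over the frequency,
and, the cosine functions being uniformly bounded, they may be integrated termwise against an
arbitrary `L¹` function.
-/

open Function
open scoped FourierTransform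

section Univariate

/-- The `k`-th half-period cosine coefficient of a function on `[0, 1]`. -/
noncomputable def hpcFunCoeff (g : ℝ → ℂ) (k : ℕ) : ℂ :=
  ∫ x in (0 : ℝ)..1, (hpcFun k x : ℂ) * g x

theorem hpcFun_eq_mul_cos (k : ℕ) (x : ℝ) :
    hpcFun k x = hpcFun k 0 * Real.cos (Real.pi * k * x) := by
  rcases eq_or_ne k 0 with rfl | hk
  · simp [hpcFun]
  · simp [hpcFun, hk]

theorem one_le_hpcFun_zero (k : ℕ) : 1 ≤ hpcFun k 0 := by
  rcases eq_or_ne k 0 with rfl | hk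
  · simp [hpcFun]
  · simp [hpcFun, hk]

theorem hpcFun_zero_le_sqrt_two (k : ℕ) : hpcFun k 0 ≤ √2 := by
  rcases eq_or_ne k 0 with rfl | hk
  · simpa only [hpcFun, if_true] using Real.one_le_sqrt.2 one_le_two
  · simp only [hpcFun, hk, if_false, mul_zero, Real.cos_zero, mul_one, le_refl]

theorem abs_hpcFun_le_sqrt_two (k : ℕ) (x : ℝ) : |hpcFun k x| ≤ √2 := by
  rw [hpcFun_eq_mul_cos, abs_mul, abs_of_nonneg (zero_le_one.trans (one_le_hpcFun_zero k))]
  exact (mul_le_of_le_one_right (zero_le_one.trans (one_le_hpcFun_zero k))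
    (Real.abs_cos_le_one _)).trans (hpcFun_zero_le_sqrt_two k)

@[fun_prop]
theorem continuous_hpcFun (k : ℕ) : Continuous (hpcFun k) := by
  rw [funext (hpcFun_eq_mul_cos k)]
  fun_prop

theorem hpcFunCoeff_eq_mul_integral_cos (g : ℝ → ℂ) (k : ℕ) :
    hpcFunCoeff g k =
      hpcFun k 0 * ∫ x in (0 : ℝ)..1, (Real.cos (Real.pi * k * x) : ℂ) * g x := by
  rw [hpcFunCoeff, ← intervalIntegral.integral_const_mul]
  refine intervalIntegral.integral_congr fun x _ => ?_
  rw [hpcFun_eq_mul_cos, Complex.ofReal_mul, mul_assoc]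

theorem integral_exp_mul_comp_abs {g : ℝ → ℂ} (hg : ContinuousOn g (Icc 0 1)) (b : ℝ) :
    ∫ x in (-1 : ℝ)..1, Complex.exp (-(b * x * Complex.I)) * g |x| =
      2 * ∫ x in (0 : ℝ)..1, (Real.cos (b * x) : ℂ) * g x := by
  set F : ℝ → ℂ := fun x => Complex.exp (-(b * x * Complex.I)) * g |x|
  have hF : ContinuousOn F (Icc (-1) 1) :=
    ContinuousOn.mul (by fun_prop)
      (hg.comp continuous_abs.continuousOn fun x hx => ⟨abs_nonneg x, abs_le.2 hx⟩)
  have hF_pos : IntervalIntegrable F volume 0 1 :=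
    (hF.mono (Icc_subset_Icc_left (by norm_num))).intervalIntegrable_of_Icc zero_le_one
  have hF_neg : IntervalIntegrable F volume (-1) 0 :=
    (hF.mono (Icc_subset_Icc_right zero_le_one)).intervalIntegrable_of_Icc (by norm_num)
  have hF_refl : IntervalIntegrable (fun x => F (-x)) volume 0 1 := by
    simpa using ((IntervalIntegrable.iff_comp_neg (by finiteness)).1 hF_neg).symm
  have integral_neg_zero : ∫ x in (-1 : ℝ)..0, F x = ∫ x in (0 : ℝ)..1, F (-x) := by
    rw [intervalIntegral.integral_comp_neg, neg_zero]
  rw [← intervalIntegral.integral_add_adjacent_intervals hF_neg hF_pos, integral_neg_zero,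
    ← intervalIntegral.integral_add hF_refl hF_pos, ← intervalIntegral.integral_const_mul]
  refine intervalIntegral.integral_congr fun x hx => ?_
  rw [uIcc_of_le zero_le_one] at hx
  simp only [F, abs_neg, abs_of_nonneg hx.1, ← mul_assoc, Complex.ofReal_cos, Complex.two_cos]
  push_cast
  ring_nf

local instance : Fact ((0 : ℝ) < 2) := ⟨two_pos⟩

/-- The even extension of `g : [0, 1] → ℂ` to the circle `ℝ / 2ℤ`. The half-period cosine series
of `g` is the Fourier series of this function. -/
noncomputable def evenReflection (g : ℝ → ℂ) : AddCircle (2 : ℝ) → ℂ :=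
  AddCircle.liftIoc 2 (-1) fun x => g |x|

theorem continuous_evenReflection {g : ℝ → ℂ} (hg : ContinuousOn g (Icc 0 1)) :
    Continuous (evenReflection g) := by
  refine AddCircle.liftIoc_continuous (by norm_num) ?_
  exact hg.comp continuous_abs.continuousOn fun x hx =>
    ⟨abs_nonneg x, abs_le.2 ⟨hx.1, by linarith [hx.2]⟩⟩

theorem evenReflection_coe (g : ℝ → ℂ) {x : ℝ} (hx : x ∈ Icc (0 : ℝ) 1) :
    evenReflection g x = g x := by
  rw [evenReflection,
    AddCircle.liftIoc_coe_apply ⟨by linarith [hx.1], by linarith [hx.2]⟩, abs_of_nonneg hx.1]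

theorem fourierCoeff_evenReflection {g : ℝ → ℂ} (hg : ContinuousOn g (Icc 0 1)) (n : ℤ) :
    fourierCoeff (evenReflection g) n =
      ∫ x in (0 : ℝ)..1, (Real.cos (Real.pi * n * x) : ℂ) * g x := by
  have integral_fourier_smul :
      ∫ x in (-1 : ℝ)..-1 + 2, fourier (-n) (x : AddCircle ((-1 : ℝ) + 2 - -1)) • g |x| =
        2 * ∫ x in (0 : ℝ)..1, (Real.cos (Real.pi * n * x) : ℂ) * g x := by
    rw [← integral_exp_mul_comp_abs hg, show (-1 : ℝ) + 2 = 1 by norm_num]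
    refine intervalIntegral.integral_congr fun x _ => ?_
    simp only [fourier_coe_apply, smul_eq_mul]
    congr 2
    push_cast
    ring
  rw [evenReflection, fourierCoeff_liftIoc_eq, fourierCoeffOn_eq_integral, integral_fourier_smul,
    Complex.real_smul]
  push_cast
  ring

theorem hpcFunCoeff_eq_mul_fourierCoeff {g : ℝ → ℂ} (hg : ContinuousOn g (Icc 0 1)) (k : ℕ) :
    hpcFunCoeff g k = hpcFun k 0 * fourierCoeff (evenReflection g) k := by
  rw [hpcFunCoeff_eq_mul_integral_cos, fourierCoeff_evenReflection hg, Int.cast_natCast]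

theorem fourierCoeff_evenReflection_neg {g : ℝ → ℂ} (hg : ContinuousOn g (Icc 0 1)) (n : ℤ) :
    fourierCoeff (evenReflection g) (-n) = fourierCoeff (evenReflection g) n := by
  simp [fourierCoeff_evenReflection hg]

theorem summable_fourierCoeff_evenReflection {g : ℝ → ℂ} (hg : ContinuousOn g (Icc 0 1))
    (hs : Summable fun k => ‖hpcFunCoeff g k‖) : Summable (fourierCoeff (evenReflection g)) := by
  have summable_nat : Summable fun k : ℕ => fourierCoeff (evenReflection g) k := by
    refine hs.of_norm_bounded fun k => ?_
    rw [hpcFunCoeff_eq_mul_fourierCoeff hg, norm_mul, Complex.norm_real]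
    exact le_mul_of_one_le_left (norm_nonneg _) ((one_le_hpcFun_zero k).trans (le_abs_self _))
  exact .of_nat_of_neg summable_nat
    (by simpa only [fourierCoeff_evenReflection_neg hg] using summable_nat)

theorem fourier_add_fourier_neg_eq_two_mul_cos (n : ℤ) (x : ℝ) :
    fourier n (x : AddCircle (2 : ℝ)) + fourier (-n) (x : AddCircle (2 : ℝ)) =
      2 * Real.cos (Real.pi * n * x) := by
  rw [Complex.ofReal_cos, Complex.two_cos, fourier_coe_apply, fourier_coe_apply]
  push_cast
  ring_nf

theorem hasSum_hpcFunCoeff_mul_hpcFun {g : ℝ → ℂ} (hg : ContinuousOn g (Icc 0 1))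
    (hs : Summable fun k => ‖hpcFunCoeff g k‖) {x : ℝ} (hx : x ∈ Icc (0 : ℝ) 1) :
    HasSum (fun k => hpcFunCoeff g k * hpcFun k x) (g x) := by
  let c := fourierCoeff (evenReflection g)
  have hasSum_fourier : HasSum (fun n : ℤ => c n * fourier n (x : AddCircle (2 : ℝ))) (g x) := by
    rw [← evenReflection_coe g hx]
    exact has_pointwise_sum_fourier_series_of_summable
      (f := ⟨evenReflection g, continuous_evenReflection hg⟩)
      (summable_fourierCoeff_evenReflection hg hs) x
  have hasSum_nat := hasSum_fourier.nat_add_neg.sub (hasSum_ite_eq (0 : ℕ) (c 0))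
  rw [fourier_zero, mul_one, add_sub_cancel_right] at hasSum_nat
  refine hasSum_nat.congr_fun fun k => ?_
  have c_neg : c (-k) = c k := fourierCoeff_evenReflection_neg hg k
  rw [hpcFunCoeff_eq_mul_fourierCoeff hg, c_neg, ← mul_add,
    fourier_add_fourier_neg_eq_two_mul_cos, hpcFun_eq_mul_cos k x]
  rcases eq_or_ne k 0 with rfl | hk
  · simp [hpcFun, c, mul_two]
  · have sq_sqrt_two : ((√2 : ℝ) : ℂ) ^ 2 = 2 := by exact_mod_cast Real.sq_sqrt zero_le_two
    simp only [hpcFun, hk, if_false, mul_zero, Real.cos_zero, mul_one, Complex.ofReal_mul,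
      Complex.ofReal_cos, Complex.ofReal_natCast, Int.cast_natCast, sub_zero, c]
    linear_combination c k * Complex.cos (Real.pi * k * x) * sq_sqrt_two

theorem sq_mul_integral_cos_mul_add_integral_cos_mul_deriv2 {g g' g'' : ℝ → ℂ} (b : ℝ)
    (hg : ∀ x ∈ Icc (0 : ℝ) 1, HasDerivAt g (g' x) x)
    (hg' : ∀ x ∈ Icc (0 : ℝ) 1, HasDerivAt g' (g'' x) x) (hg'' : ContinuousOn g'' (Icc 0 1)) :
    (b : ℂ) ^ 2 * (∫ x in (0 : ℝ)..1, (Real.cos (b * x) : ℂ) * g x) +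
        ∫ x in (0 : ℝ)..1, (Real.cos (b * x) : ℂ) * g'' x =
      b * Real.sin b * g 1 + Real.cos b * g' 1 - g' 0 := by
  have hasDerivAt_primitive : ∀ x ∈ uIcc (0 : ℝ) 1, HasDerivAt
      (fun x : ℝ => b * (Real.sin (b * x) : ℂ) * g x + Real.cos (b * x) * g' x)
      ((b : ℂ) ^ 2 * (Real.cos (b * x) * g x) + Real.cos (b * x) * g'' x) x := by
    intro x hx
    rw [uIcc_of_le zero_le_one] at hx
    have hasDerivAt_arg : HasDerivAt (fun x : ℝ => b * x) b x := by
      simpa using (hasDerivAt_id x).const_mul b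
    have hasDerivAt_sin := hasDerivAt_arg.sin.ofReal_comp.const_mul (b : ℂ)
    have hasDerivAt_cos := hasDerivAt_arg.cos.ofReal_comp
    refine ((hasDerivAt_sin.mul (hg x hx)).add (hasDerivAt_cos.mul (hg' x hx))).congr_deriv ?_
    push_cast
    ring
  have intervalIntegrable_cos_mul {u : ℝ → ℂ} (hu : ContinuousOn u (Icc 0 1)) :
      IntervalIntegrable (fun x => (Real.cos (b * x) : ℂ) * u x) volume 0 1 :=
    (ContinuousOn.mul (by fun_prop) hu).intervalIntegrable_of_Icc zero_le_one
  have integrable_g := (intervalIntegrable_cos_mul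
    fun x hx => (hg x hx).continuousAt.continuousWithinAt).const_mul ((b : ℂ) ^ 2)
  have integrable_g'' := intervalIntegrable_cos_mul hg''
  rw [← intervalIntegral.integral_const_mul,
    ← intervalIntegral.integral_add integrable_g integrable_g'',
    intervalIntegral.integral_eq_sub_of_hasDerivAt hasDerivAt_primitive
      (integrable_g.add integrable_g'')]
  simp

theorem norm_integral_cos_mul_le {g : ℝ → ℂ} {A : ℝ} (b : ℝ)
    (hA : ∀ x ∈ Icc (0 : ℝ) 1, ‖g x‖ ≤ A) :
    ‖∫ x in (0 : ℝ)..1, (Real.cos (b * x) : ℂ) * g x‖ ≤ A := by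
  refine (intervalIntegral.norm_integral_le_of_norm_le_const fun x hx => ?_).trans_eq
    (by rw [sub_zero, abs_one, mul_one])
  rw [uIoc_of_le zero_le_one] at hx
  rw [norm_mul, Complex.norm_real]
  exact (mul_le_of_le_one_left (norm_nonneg _) (Real.abs_cos_le_one _)).trans
    (hA x (Ioc_subset_Icc_self hx))

theorem norm_hpcFunCoeff_le {g g' g'' : ℝ → ℂ} {A B D : ℝ}
    (hg : ∀ x ∈ Icc (0 : ℝ) 1, HasDerivAt g (g' x) x)
    (hg' : ∀ x ∈ Icc (0 : ℝ) 1, HasDerivAt g' (g'' x) x) (hg'' : ContinuousOn g'' (Icc 0 1))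
    (hA : ∀ x ∈ Icc (0 : ℝ) 1, ‖g x‖ ≤ A) (hB : ∀ x ∈ Icc (0 : ℝ) 1, ‖g' x‖ ≤ B)
    (hD : ∀ x ∈ Icc (0 : ℝ) 1, ‖g'' x‖ ≤ D) (k : ℕ) :
    ‖hpcFunCoeff g k‖ ≤ √2 * (A + 2 * B + D) * (1 + (k : ℝ) ^ 2)⁻¹ := by
  set b : ℝ := Real.pi * k
  set I : ℂ := ∫ x in (0 : ℝ)..1, (Real.cos (b * x) : ℂ) * g x
  have norm_I_le : ‖I‖ ≤ A := norm_integral_cos_mul_le b hA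
  have sin_b : Real.sin b = 0 := (congrArg Real.sin (mul_comm _ _)).trans (Real.sin_nat_mul_pi k)
  have norm_cos_mul_le : ‖(Real.cos b : ℂ) * g' 1‖ ≤ B := by
    rw [norm_mul, Complex.norm_real]
    exact (mul_le_of_le_one_left (norm_nonneg _) (Real.abs_cos_le_one _)).trans (hB 1 (by simp))
  have sq_mul_norm_I_le : b ^ 2 * ‖I‖ ≤ 2 * B + D := by
    have by_parts : (b : ℂ) ^ 2 * I = Real.cos b * g' 1 - g' 0 -
        ∫ x in (0 : ℝ)..1, (Real.cos (b * x) : ℂ) * g'' x := by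
      rw [eq_sub_iff_add_eq, sq_mul_integral_cos_mul_add_integral_cos_mul_deriv2 b hg hg' hg'',
        sin_b, Complex.ofReal_zero, mul_zero, zero_mul, zero_add]
    calc b ^ 2 * ‖I‖ = ‖(b : ℂ) ^ 2 * I‖ := by
          rw [norm_mul, norm_pow, Complex.norm_real, Real.norm_eq_abs, sq_abs]
      _ ≤ B + B + D := by
          rw [by_parts]
          exact norm_sub_le_of_le (norm_sub_le_of_le norm_cos_mul_le (hB 0 (by simp)))
            (norm_integral_cos_mul_le b hD)
      _ = 2 * B + D := by ring
  have sq_le_sq_b : (k : ℝ) ^ 2 ≤ b ^ 2 := by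
    gcongr
    exact le_mul_of_one_le_left k.cast_nonneg (by linarith [Real.pi_gt_three])
  have norm_I_decay : ‖I‖ ≤ (A + 2 * B + D) * (1 + (k : ℝ) ^ 2)⁻¹ := by
    rw [← div_eq_mul_inv, le_div_iff₀ (by positivity)]
    linarith [mul_le_mul_of_nonneg_right sq_le_sq_b (norm_nonneg I)]
  rw [hpcFunCoeff_eq_mul_integral_cos, norm_mul, Complex.norm_real, Real.norm_eq_abs, mul_assoc]
  exact mul_le_mul (abs_hpcFun_le_sqrt_two k 0) norm_I_decay (norm_nonneg _) (Real.sqrt_nonneg _)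

theorem hasDerivAt_fourierChar_const_mul (t x : ℝ) :
    HasDerivAt (fun x : ℝ => (𝐞 (t * x) : ℂ)) (2 * Real.pi * Complex.I * t * 𝐞 (t * x)) x := by
  have hasDerivAt_arg : HasDerivAt (fun x : ℝ => t * x) t x := by
    simpa using (hasDerivAt_id x).const_mul t
  refine ((Real.hasDerivAt_fourierChar (t * x)).scomp x hasDerivAt_arg).congr_deriv ?_
  rw [Complex.real_smul]
  ring

theorem exists_norm_hpcFunCoeff_fourierChar_le :
    ∃ C, ∀ (t : ℝ) (k : ℕ),
      ‖hpcFunCoeff (fun x => 𝐞 (t * x)) k‖ ≤ C * (1 + t ^ 2) * (1 + (k : ℝ) ^ 2)⁻¹ := by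
  refine ⟨√2 * (2 * (2 * Real.pi) ^ 2), fun t k => ?_⟩
  set c : ℂ := 2 * Real.pi * Complex.I * t
  have norm_c : ‖c‖ = 2 * Real.pi * |t| := by simp [c, abs_of_pos Real.pi_pos]
  have hasDerivAt_char (x : ℝ) := hasDerivAt_fourierChar_const_mul t x
  have coeff_le := norm_hpcFunCoeff_le (A := 1) (B := ‖c‖) (D := ‖c‖ * ‖c‖) (k := k)
    (fun x _ => hasDerivAt_char x) (fun x _ => (hasDerivAt_char x).const_mul c)
    (by fun_prop) (fun _ _ => (Circle.norm_coe _).le)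
    (fun _ _ => by rw [norm_mul, Circle.norm_coe, mul_one])
    (fun _ _ => by rw [norm_mul c, norm_mul c, Circle.norm_coe, mul_one])
  refine coeff_le.trans (mul_le_mul_of_nonneg_right ?_ (by positivity))
  rw [mul_assoc √2]
  refine mul_le_mul_of_nonneg_left ?_ (Real.sqrt_nonneg _)
  calc 1 + 2 * ‖c‖ + ‖c‖ * ‖c‖ ≤ 2 * (1 + (2 * Real.pi * |t|) ^ 2) := by
        rw [← norm_c]; linarith [sq_nonneg (‖c‖ - 1)]
    _ = 2 * (1 + (2 * Real.pi) ^ 2 * t ^ 2) := by rw [mul_pow, sq_abs]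
    _ ≤ 2 * (2 * Real.pi) ^ 2 * (1 + t ^ 2) := by nlinarith [Real.pi_gt_three]

theorem summable_inv_one_add_sq : Summable fun k : ℕ => (1 + (k : ℝ) ^ 2)⁻¹ := by
  refine .of_nonneg_of_le (fun k => by positivity) (fun k => ?_)
    (((summable_nat_add_iff 1).2 (Real.summable_nat_pow_inv.2 one_lt_two)).mul_left 2)
  rw [← div_eq_mul_inv, le_div_iff₀ (by positivity), inv_mul_le_iff₀ (by positivity)]
  push_cast
  nlinarith [sq_nonneg ((k : ℝ) - 1)]

theorem summable_norm_hpcFunCoeff_fourierChar (t : ℝ) :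
    Summable fun k => ‖hpcFunCoeff (fun x => 𝐞 (t * x)) k‖ := by
  obtain ⟨C, hC⟩ := exists_norm_hpcFunCoeff_fourierChar_le
  exact .of_nonneg_of_le (fun _ => norm_nonneg _) (hC t) (summable_inv_one_add_sq.mul_left _)

end Univariate

section ProductSeries

variable {R : Type*} [NormedCommRing R]

theorem summable_norm_fin_prod {n : ℕ} {κ : Fin n → Type*} {u : ∀ i, κ i → R}
    (hu : ∀ i, Summable fun j => ‖u i j‖) :
    Summable fun k : ∀ i, κ i => ‖∏ i, u i (k i)‖ := by
  induction n with
  | zero => exact (hasSum_fintype _).summable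
  | succ n ih =>
    rw [← (Fin.consEquiv κ).summable_iff]
    refine ((hu 0).mul_norm (ih fun i => hu i.succ)).congr fun p => ?_
    simp [Fin.consEquiv, Fin.prod_univ_succ]

theorem hasSum_fin_prod [CompleteSpace R] {n : ℕ} {κ : Fin n → Type*} {u : ∀ i, κ i → R}
    {s : Fin n → R} (hu : ∀ i, Summable fun j => ‖u i j‖) (hs : ∀ i, HasSum (u i) (s i)) :
    HasSum (fun k : ∀ i, κ i => ∏ i, u i (k i)) (∏ i, s i) := by
  induction n with
  | zero => simp
  | succ n ih =>
    have summable_mul := (hu 0).mul_norm (summable_norm_fin_prod fun i => hu i.succ)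
    rw [← (Fin.consEquiv κ).hasSum_iff, Fin.prod_univ_succ]
    refine ((hs 0).mul (ih (fun i => hu i.succ) fun i => hs i.succ)
      summable_mul.of_norm).congr_fun fun p => ?_
    simp [Fin.consEquiv, Fin.prod_univ_succ]

end ProductSeries

section CosineExpansion

variable {d : ℕ}

/-- The `k`-th half-period cosine coefficient of a function on the cube `[0, 1]^d`. -/
noncomputable def hpcCoeff (g : (Fin d → ℝ) → ℂ) (k : Fin d → ℕ) : ℂ :=
  ∫ x in Icc 0 1, (hpc d k x : ℂ) * g x

@[fun_prop]
theorem continuous_hpc (k : Fin d → ℕ) : Continuous (hpc d k) := by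
  unfold hpc
  fun_prop

theorem norm_hpc_le (k : Fin d → ℕ) (x : Fin d → ℝ) : ‖(hpc d k x : ℂ)‖ ≤ √2 ^ d := by
  rw [Complex.norm_real, hpc, norm_prod]
  refine (Finset.prod_le_prod (fun _ _ => norm_nonneg _)
    fun i _ => abs_hpcFun_le_sqrt_two (k i) (x i)).trans_eq ?_
  rw [Finset.prod_const, Finset.card_univ, Fintype.card_fin]

theorem integrable_hpc_mul {α : Type*} [MeasurableSpace α] {μ : Measure α} {F : α → ℂ}
    (hF : Integrable F μ) (k : Fin d → ℕ) {p : α → Fin d → ℝ} (hp : Measurable p) :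
    Integrable (fun a => (hpc d k (p a) : ℂ) * F a) μ :=
  hF.bdd_mul (Complex.measurable_ofReal.comp
      ((continuous_hpc k).measurable.comp hp)).aestronglyMeasurable
    (.of_forall fun a => norm_hpc_le k (p a))

theorem hpcCoeff_const_mul (c : ℂ) (g : (Fin d → ℝ) → ℂ) (k : Fin d → ℕ) :
    hpcCoeff (fun x => c * g x) k = c * hpcCoeff g k := by
  simp only [hpcCoeff, mul_left_comm _ c]
  exact integral_const_mul c _

theorem hpcCoeff_prod (g : Fin d → ℝ → ℂ) (k : Fin d → ℕ) :
    hpcCoeff (fun x => ∏ i, g i (x i)) k = ∏ i, hpcFunCoeff (g i) (k i) := by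
  have restrict_cube : volume.restrict (Icc (0 : Fin d → ℝ) 1) =
      Measure.pi fun _ => volume.restrict (Icc 0 1) := by
    rw [← pi_univ_Icc, volume_pi, Measure.restrict_pi_pi]
    rfl
  simp only [hpcCoeff, hpc, Complex.ofReal_prod, ← Finset.prod_mul_distrib, restrict_cube]
  rw [integral_fintype_prod_eq_prod fun i t => (hpcFun (k i) t : ℂ) * g i t]
  refine Finset.prod_congr rfl fun i _ => ?_
  rw [hpcFunCoeff, intervalIntegral.integral_of_le zero_le_one, integral_Icc_eq_integral_Ioc]

/-- On the cube `[0, 1]^d`, the function `g` is the sum of its half-period cosine series, whose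
coefficients are absolutely summable. -/
structure HasCosineExpansion (g : (Fin d → ℝ) → ℂ) : Prop where
  summable_norm : Summable fun k => ‖hpcCoeff g k‖
  hasSum : ∀ x ∈ Icc 0 1, HasSum (fun k => hpcCoeff g k * hpc d k x) (g x)

namespace HasCosineExpansion

theorem congr {g₁ g₂ : (Fin d → ℝ) → ℂ} (hg : HasCosineExpansion g₁)
    (h : EqOn g₂ g₁ (Icc 0 1)) : HasCosineExpansion g₂ := by
  have hpcCoeff_eq : hpcCoeff g₂ = hpcCoeff g₁ := by
    funext k
    refine setIntegral_congr_fun measurableSet_Icc fun x hx => ?_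
    rw [h hx]
  refine ⟨hpcCoeff_eq ▸ hg.summable_norm, fun x hx => ?_⟩
  rw [hpcCoeff_eq, h hx]
  exact hg.hasSum x hx

theorem const_mul {g : (Fin d → ℝ) → ℂ} (hg : HasCosineExpansion g) (c : ℂ) :
    HasCosineExpansion fun x => c * g x := by
  constructor
  · simpa only [hpcCoeff_const_mul, norm_mul] using hg.summable_norm.mul_left ‖c‖
  · intro x hx
    simpa only [hpcCoeff_const_mul, mul_assoc] using (hg.hasSum x hx).mul_left c

theorem prod {g : Fin d → ℝ → ℂ} (hg : ∀ i, ContinuousOn (g i) (Icc 0 1))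
    (hs : ∀ i, Summable fun k => ‖hpcFunCoeff (g i) k‖) :
    HasCosineExpansion fun x : Fin d → ℝ => ∏ i, g i (x i) := by
  constructor
  · simpa only [hpcCoeff_prod] using summable_norm_fin_prod hs
  · intro x hx
    have summable_factor (i : Fin d) :
        Summable fun k => ‖hpcFunCoeff (g i) k * hpcFun k (x i)‖ := by
      refine .of_nonneg_of_le (fun _ => norm_nonneg _) (fun k => ?_) ((hs i).mul_right √2)
      rw [norm_mul, Complex.norm_real]
      exact mul_le_mul_of_nonneg_left (abs_hpcFun_le_sqrt_two k (x i)) (norm_nonneg _)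
    simpa only [hpcCoeff_prod, hpc, Complex.ofReal_prod, ← Finset.prod_mul_distrib] using
      hasSum_fin_prod summable_factor fun i =>
        hasSum_hpcFunCoeff_mul_hpcFun (hg i) (hs i) ⟨hx.1 i, hx.2 i⟩

theorem integral {Ω : Type*} [MeasurableSpace Ω] {μ : Measure Ω} [SFinite μ]
    {G : Ω → (Fin d → ℝ) → ℂ} {W : Ω → ℝ} {b : (Fin d → ℕ) → ℝ}
    (hG : Integrable (uncurry G) (μ.prod (volume.restrict (Icc 0 1))))
    (hexp : ∀ ω, HasCosineExpansion (G ω)) (hW : Integrable W μ) (hb : Summable b)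
    (hle : ∀ ω k, ‖hpcCoeff (G ω) k‖ ≤ W ω * b k) :
    HasCosineExpansion fun x => ∫ ω, G ω x ∂μ := by
  have integrable_hpc_mul_G (k : Fin d → ℕ) := integrable_hpc_mul hG k measurable_snd
  have hpcCoeff_integral (k : Fin d → ℕ) :
      hpcCoeff (fun x => ∫ ω, G ω x ∂μ) k = ∫ ω, hpcCoeff (G ω) k ∂μ := by
    simp only [hpcCoeff, ← integral_const_mul]
    exact (integral_integral_swap (integrable_hpc_mul_G k)).symm
  constructor
  · refine .of_nonneg_of_le (fun _ => norm_nonneg _) (fun k => ?_) (hb.mul_left (∫ ω, W ω ∂μ))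
    rw [hpcCoeff_integral, ← integral_mul_const]
    exact norm_integral_le_of_norm_le (hW.mul_const _) (.of_forall fun ω => hle ω k)
  · intro x hx
    simp only [hpcCoeff_integral, ← integral_mul_const]
    refine hasSum_integral_of_dominated_convergence (fun k ω => W ω * b k * √2 ^ d)
      (fun k => ((integrable_hpc_mul_G k).integral_prod_left.mul_const _).aestronglyMeasurable)
      (fun k => .of_forall fun ω => ?_)
      (.of_forall fun ω => (hb.mul_left _).mul_right _) ?_
      (.of_forall fun ω => (hexp ω).hasSum x hx)
    · exact norm_mul_le_of_le (hle ω k) (norm_hpc_le k x)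
    · simp only [tsum_mul_right, tsum_mul_left]
      exact (hW.mul_const _).mul_const _

theorem hasSum_mul_hpcCoeff {f g : (Fin d → ℝ) → ℂ} (hg : HasCosineExpansion g)
    (hf : IntegrableOn f (Icc 0 1)) :
    HasSum (fun k => (∫ x in Icc 0 1, f x * (hpc d k x : ℂ)) * hpcCoeff g k)
      (∫ x in Icc 0 1, f x * g x) := by
  simp only [← integral_mul_const]
  refine hasSum_integral_of_dominated_convergence (fun k x => ‖f x‖ * √2 ^ d * ‖hpcCoeff g k‖)
    (fun k => ?_) (fun k => .of_forall fun x => ?_)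
    (.of_forall fun x => hg.summable_norm.mul_left _) ?_ ?_
  · simpa only [mul_comm] using
      ((integrable_hpc_mul hf k measurable_id').mul_const (hpcCoeff g k)).aestronglyMeasurable
  · rw [norm_mul, norm_mul]
    gcongr
    exact norm_hpc_le k x
  · simp only [tsum_mul_left]
    exact (hf.norm.mul_const _).mul_const _
  · refine (ae_restrict_mem measurableSet_Icc).mono fun x hx => ?_
    simpa only [mul_assoc, mul_comm, mul_left_comm] using (hg.hasSum x hx).mul_left (f x)

end HasCosineExpansion

end CosineExpansion

section PlaneWave

variable {d : ℕ}

/-- The plane wave `x ↦ exp (2πi ⟨ξ, x⟩)`, written as a product over the coordinates. -/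
noncomputable def planeWave (ξ x : Fin d → ℝ) : ℂ :=
  ∏ i, (𝐞 (ξ i * x i) : ℂ)

theorem norm_planeWave (ξ x : Fin d → ℝ) : ‖planeWave ξ x‖ = 1 := by
  simp only [planeWave, norm_prod, Circle.norm_coe, Finset.prod_const_one]

theorem continuous_uncurry_planeWave : Continuous (uncurry (planeWave (d := d))) := by
  unfold planeWave
  fun_prop

theorem hasCosineExpansion_planeWave (ξ : Fin d → ℝ) : HasCosineExpansion (planeWave ξ) :=
  .prod (g := fun i t => 𝐞 (ξ i * t)) (fun i => by fun_prop)
    fun i => summable_norm_hpcFunCoeff_fourierChar (ξ i)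

theorem exists_norm_hpcCoeff_planeWave_le (d : ℕ) :
    ∃ C, ∀ (ξ : Fin d → ℝ) (k : Fin d → ℕ),
      ‖hpcCoeff (planeWave ξ) k‖ ≤ C * (∏ i, (1 + ξ i ^ 2)) * ∏ i, (1 + (k i : ℝ) ^ 2)⁻¹ := by
  obtain ⟨C, hC⟩ := exists_norm_hpcFunCoeff_fourierChar_le
  refine ⟨C ^ d, fun ξ k => ?_⟩
  calc ‖hpcCoeff (planeWave ξ) k‖
      = ∏ i, ‖hpcFunCoeff (fun t => 𝐞 (ξ i * t)) (k i)‖ := by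
        rw [← norm_prod]
        exact congrArg _ (hpcCoeff_prod (fun i t => 𝐞 (ξ i * t)) k)
    _ ≤ ∏ i, C * (1 + ξ i ^ 2) * (1 + (k i : ℝ) ^ 2)⁻¹ :=
        Finset.prod_le_prod (fun _ _ => norm_nonneg _) fun i _ => hC (ξ i) (k i)
    _ = C ^ d * (∏ i, (1 + ξ i ^ 2)) * ∏ i, (1 + (k i : ℝ) ^ 2)⁻¹ := by
        simp only [Finset.prod_mul_distrib, Finset.prod_const, Finset.card_univ, Fintype.card_fin]

theorem summable_prod_inv_one_add_sq (d : ℕ) :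
    Summable fun k : Fin d → ℕ => ∏ i, (1 + (k i : ℝ) ^ 2)⁻¹ :=
  (summable_norm_fin_prod fun _ => summable_inv_one_add_sq.norm).of_norm

theorem one_le_prod_one_add_sq (ξ : Fin d → ℝ) : 1 ≤ ∏ i, (1 + ξ i ^ 2) :=
  Finset.one_le_prod fun i _ => le_add_of_nonneg_right (sq_nonneg (ξ i))

theorem integrable_of_integrable_prod_one_add_sq_smul {μ : Measure (Fin d → ℝ)}
    {h : (Fin d → ℝ) → ℂ} (hh : Integrable (fun ξ => (∏ i, (1 + ξ i ^ 2)) • h ξ) μ) :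
    Integrable h μ := by
  have weight_pos (ξ : Fin d → ℝ) : 0 < ∏ i, (1 + ξ i ^ 2) :=
    zero_lt_one.trans_le (one_le_prod_one_add_sq ξ)
  have continuous_inv_weight : Continuous fun ξ : Fin d → ℝ => (∏ i, (1 + ξ i ^ 2))⁻¹ :=
    .inv₀ (by fun_prop) fun ξ => (weight_pos ξ).ne'
  refine (hh.bdd_smul 1 continuous_inv_weight.aestronglyMeasurable
    (.of_forall fun ξ => ?_)).congr (.of_forall fun ξ => inv_smul_smul₀ (weight_pos ξ).ne' _)
  rw [Real.norm_of_nonneg (inv_nonneg.2 (weight_pos ξ).le)]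
  exact inv_le_one_of_one_le₀ (one_le_prod_one_add_sq ξ)

theorem integrable_mul_planeWave {μ ν : Measure (Fin d → ℝ)} [SFinite μ]
    [IsFiniteMeasure ν] {h : (Fin d → ℝ) → ℂ} (hh : Integrable h μ) :
    Integrable (uncurry fun ξ x => h ξ * planeWave ξ x) (μ.prod ν) :=
  (hh.comp_fst ν).mul_bdd continuous_uncurry_planeWave.aestronglyMeasurable
    (.of_forall fun p => (norm_planeWave p.1 p.2).le)

theorem hasCosineExpansion_integral_planeWave {μ : Measure (Fin d → ℝ)} [SFinite μ]
    {h : (Fin d → ℝ) → ℂ} (hh : Integrable (fun ξ => (∏ i, (1 + ξ i ^ 2)) • h ξ) μ) :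
    HasCosineExpansion fun x => ∫ ξ, h ξ * planeWave ξ x ∂μ := by
  obtain ⟨C, hC⟩ := exists_norm_hpcCoeff_planeWave_le d
  have isFiniteMeasure_cube : IsFiniteMeasure (volume.restrict (Icc (0 : Fin d → ℝ) 1)) :=
    isFiniteMeasure_restrict.2 isCompact_Icc.measure_ne_top
  refine .integral (W := fun ξ => C * ‖(∏ i, (1 + ξ i ^ 2)) • h ξ‖)
    (integrable_mul_planeWave (integrable_of_integrable_prod_one_add_sq_smul hh))
    (fun ξ => (hasCosineExpansion_planeWave ξ).const_mul (h ξ)) (hh.norm.const_mul C)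
    (summable_prod_inv_one_add_sq d) fun ξ k => ?_
  have weight_nonneg : 0 ≤ ∏ i, (1 + ξ i ^ 2) := zero_le_one.trans (one_le_prod_one_add_sq ξ)
  calc ‖hpcCoeff (fun x => h ξ * planeWave ξ x) k‖ = ‖h ξ‖ * ‖hpcCoeff (planeWave ξ) k‖ := by
        rw [hpcCoeff_const_mul, norm_mul]
    _ ≤ ‖h ξ‖ * (C * (∏ i, (1 + ξ i ^ 2)) * ∏ i, (1 + (k i : ℝ) ^ 2)⁻¹) := by
        gcongr
        exact hC ξ k
    _ = C * ‖(∏ i, (1 + ξ i ^ 2)) • h ξ‖ * ∏ i, (1 + (k i : ℝ) ^ 2)⁻¹ := by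
        rw [norm_smul, Real.norm_of_nonneg weight_nonneg]
        ring

end PlaneWave

section Schwartz

variable {d : ℕ}

theorem hasTemperateGrowth_finset_prod {ι E R : Type*} [NormedAddCommGroup E]
    [NormedSpace ℝ E] [NormedCommRing R] [NormedAlgebra ℝ R] (s : Finset ι) {w : ι → E → R}
    (hw : ∀ i ∈ s, (w i).HasTemperateGrowth) :
    (fun x => ∏ i ∈ s, w i x).HasTemperateGrowth := by
  classical
  induction s using Finset.induction_on with
  | empty => simpa only [Finset.prod_empty] using HasTemperateGrowth.const 1
  | insert i s hi ih =>
    simp only [Finset.prod_insert hi]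
    exact (hw i (Finset.mem_insert_self i s)).mul
      (ih fun j hj => hw j (Finset.mem_insert_of_mem hj))

theorem integrable_prod_one_add_sq_smul (h : SchwartzMap (Fin d → ℝ) ℂ) :
    Integrable fun ξ => (∏ i, (1 + ξ i ^ 2)) • h ξ := by
  have hasTemperateGrowth_weight :
      (fun ξ : Fin d → ℝ => ∏ i, (1 + ξ i ^ 2)).HasTemperateGrowth :=
    hasTemperateGrowth_finset_prod _ fun i _ => (HasTemperateGrowth.const 1).add
      ((ContinuousLinearMap.proj (R := ℝ) (φ := fun _ => ℝ) i).hasTemperateGrowth.pow 2)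
  exact (SchwartzMap.smulLeftCLM ℂ (fun ξ : Fin d → ℝ => ∏ i, (1 + ξ i ^ 2)) h).integrable.congr
    (.of_forall (SchwartzMap.smulLeftCLM_apply_apply hasTemperateGrowth_weight h))

theorem fourierChar_inner_eq_planeWave (ξ x : Fin d → ℝ) :
    (𝐞 (inner ℝ (WithLp.toLp 2 ξ) (WithLp.toLp 2 x)) : ℂ) = planeWave ξ x := by
  simp only [planeWave, Real.fourierChar_apply, ← Complex.exp_sum, ← Finset.sum_mul,
    ← Complex.ofReal_sum, ← Finset.mul_sum, PiLp.inner_apply]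
  simp only [RCLike.inner_apply, conj_trivial, mul_comm (x _)]

theorem exists_eq_integral_mul_planeWave (η : SchwartzMap (Fin d → ℝ) ℂ) :
    ∃ h : SchwartzMap (Fin d → ℝ) ℂ, ∀ x, η x = ∫ ξ, h ξ * planeWave ξ x := by
  let ofLpEquiv := EuclideanSpace.equiv (Fin d) ℝ
  let η₂ := SchwartzMap.compCLMOfContinuousLinearEquiv ℂ ofLpEquiv η
  refine ⟨SchwartzMap.compCLMOfContinuousLinearEquiv ℂ ofLpEquiv.symm (𝓕 η₂), fun x => ?_⟩
  calc η x = 𝓕⁻ (𝓕 η₂) (WithLp.toLp 2 x) := by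
        rw [FourierTransform.fourierInv_fourier_eq]; rfl
    _ = ∫ v, 𝐞 (inner ℝ v (WithLp.toLp 2 x)) • 𝓕 η₂ v := by
        rw [SchwartzMap.fourierInv_coe, Real.fourierInv_eq]
    _ = ∫ ξ : Fin d → ℝ, 𝐞 (inner ℝ (WithLp.toLp 2 ξ) (WithLp.toLp 2 x)) •
          𝓕 η₂ (WithLp.toLp 2 ξ) :=
        ((PiLp.volume_preserving_toLp (Fin d)).integral_comp
          (MeasurableEquiv.toLp 2 (Fin d → ℝ)).measurableEmbedding _).symm
    _ = _ := by
        refine integral_congr_ae (.of_forall fun ξ => ?_)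
        simp only [Circle.smul_def, smul_eq_mul, fourierChar_inner_eq_planeWave]
        exact mul_comm _ _

end Schwartz

theorem statement6_general {d : ℕ} {f η h : (Fin d → ℝ) → ℂ} (hf : IntegrableOn f (Icc 0 1))
    {μ : Measure (Fin d → ℝ)} [SFinite μ]
    (hh : Integrable (fun ξ => (∏ i, (1 + ξ i ^ 2)) • h ξ) μ)
    (hη : ∀ x ∈ Icc 0 1, η x = ∫ ξ, h ξ * planeWave ξ x ∂μ) :
    Summable (fun k : Fin d → ℕ =>
      ‖(∫ x in Icc (0 : Fin d → ℝ) 1, f x * (hpc d k x : ℂ)) *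
        (∫ x in Icc (0 : Fin d → ℝ) 1, (hpc d k x : ℂ) * η x)‖) ∧
    ∑' k : Fin d → ℕ,
        (∫ x in Icc (0 : Fin d → ℝ) 1, f x * (hpc d k x : ℂ)) *
          (∫ x in Icc (0 : Fin d → ℝ) 1, (hpc d k x : ℂ) * η x) =
      ∫ x in Icc (0 : Fin d → ℝ) 1, f x * η x := by
  have hasCosineExpansion_η : HasCosineExpansion η :=
    (hasCosineExpansion_integral_planeWave hh).congr hη
  have hasSum_pairing := hasCosineExpansion_η.hasSum_mul_hpcCoeff hf
  exact ⟨hasSum_pairing.summable.norm, hasSum_pairing.tsum_eq⟩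

/-- For `f ∈ L¹([0,1]^d)` and any Schwartz function `η`, the half-period cosine series of
`f` tested against `η` is absolutely summable and sums to `∫_{[0,1]^d} f η`; that is, the
half-period cosine series of `f` converges to `f` weak*-ly in `𝒮′(ℝ^d)`. -/
theorem statement6 (d : ℕ) (f : (Fin d → ℝ) → ℂ)
    (hf : IntegrableOn f (Icc 0 1)) (η : SchwartzMap (Fin d → ℝ) ℂ) :
    Summable (fun k : Fin d → ℕ =>
      ‖(∫ x in Icc (0 : Fin d → ℝ) 1, f x * (hpc d k x : ℂ)) *
        (∫ x in Icc (0 : Fin d → ℝ) 1, (hpc d k x : ℂ) * η x)‖) ∧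
    ∑' k : Fin d → ℕ,
        (∫ x in Icc (0 : Fin d → ℝ) 1, f x * (hpc d k x : ℂ)) *
          (∫ x in Icc (0 : Fin d → ℝ) 1, (hpc d k x : ℂ) * η x) =
      ∫ x in Icc (0 : Fin d → ℝ) 1, f x * η x := by
  obtain ⟨h, hη⟩ := exists_eq_integral_mul_planeWave η
  exact statement6_general hf (integrable_prod_one_add_sq_smul h) fun x _ => hη x
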